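/- (Theorem 2.2) The Gauss map of M satisfies Δ^{II} n = λ n on U for some real λ ≠ 0 if and only if M is part of a sphere, i.e. there exist c ∈ ℝ³ and r > 0 with ‖x(u) − c‖ = r for all u ∈ U; moreover if Δ^{II} n = λ n with λ ≠ 0 then H and K are nonzero constants on U. -/

import Mathlib

open Matrix

noncomputable section

/-- The parameter domain `ℝ²`. -/
abbrev Param : Type := Fin 2 → ℝ

/-- Vectors in Euclidean 3-space. -/
abbrev Vec3 : Type := Fin 3 → ℝ

/-- Partial derivative of a vector-valued function in the `i`-th coordinate direction. -/
noncomputable def pd (i : Fin 2) (f : Param → Vec3) (u : Param) : Vec3 :=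
  fderiv ℝ f u (Pi.single i 1)

/-- Partial derivative of a scalar function in the `i`-th coordinate direction. -/
noncomputable def pds (i : Fin 2) (f : Param → ℝ) (u : Param) : ℝ :=
  fderiv ℝ f u (Pi.single i 1)

/-- The Euclidean inner product on `ℝ³`. -/
def dot3 (a b : Vec3) : ℝ := ∑ k, a k * b k

/-- The Euclidean norm on `ℝ³`. -/
noncomputable def norm3 (a : Vec3) : ℝ := Real.sqrt (dot3 a a)

/-- The Gauss map `n = (x_{/1} × x_{/2}) / ‖x_{/1} × x_{/2}‖`. -/
noncomputable def gaussMap (x : Param → Vec3) (u : Param) : Vec3 :=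
  (norm3 (crossProduct (pd 0 x u) (pd 1 x u)))⁻¹ • crossProduct (pd 0 x u) (pd 1 x u)

/-- Components `g_{ij}` of the first fundamental form. -/
noncomputable def fformI (x : Param → Vec3) (u : Param) : Matrix (Fin 2) (Fin 2) ℝ :=
  Matrix.of fun i j => dot3 (pd i x u) (pd j x u)

/-- Components `b_{ij} = ⟨∂²x/∂u^i∂u^j, n⟩` of the second fundamental form. -/
noncomputable def fformII (x : Param → Vec3) (u : Param) : Matrix (Fin 2) (Fin 2) ℝ :=
  Matrix.of fun i j => dot3 (pd i (pd j x) u) (gaussMap x u)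

/-- Components `e_{ij} = ⟨n_{/i}, n_{/j}⟩` of the third fundamental form. -/
noncomputable def fformIII (x : Param → Vec3) (u : Param) : Matrix (Fin 2) (Fin 2) ℝ :=
  Matrix.of fun i j => dot3 (pd i (gaussMap x) u) (pd j (gaussMap x) u)

/-- The Gauss curvature `K = det(b_{ij}) / det(g_{ij})`. -/
noncomputable def gaussCurv (x : Param → Vec3) (u : Param) : ℝ :=
  (fformII x u).det / (fformI x u).det

/-- The mean curvature `H = (1/2) g^{ij} b_{ij}`. -/
noncomputable def meanCurv (x : Param → Vec3) (u : Param) : ℝ :=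
  (1 / 2) * ∑ i, ∑ j, (fformI x u)⁻¹ i j * fformII x u i j

/-- First Beltrami operator `∇^J(φ, ψ) = a^{ij} φ_{/i} ψ_{/j}` with respect to the
fundamental form with component matrix `a`, for scalar `φ` and `ℝ³`-valued `ψ`. -/
noncomputable def beltrami1 (a : Param → Matrix (Fin 2) (Fin 2) ℝ)
    (φ : Param → ℝ) (ψ : Param → Vec3) (u : Param) : Vec3 :=
  ∑ i, ∑ j, ((a u)⁻¹ i j * pds i φ u) • pd j ψ u

/-- Second Beltrami operator
`Δ^J f = −(1/√|det a|) ∂_i (√|det a| a^{ij} ∂_j f)` with respect to the fundamental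
form with component matrix `a`, acting componentwise on `ℝ³`-valued functions. -/
noncomputable def beltrami2 (a : Param → Matrix (Fin 2) (Fin 2) ℝ)
    (f : Param → Vec3) (u : Param) : Vec3 :=
  -((Real.sqrt |(a u).det|)⁻¹ •
    ∑ i, ∑ j, pd i (fun v => (Real.sqrt |(a v).det| * (a v)⁻¹ i j) • pd j f v) u)

/-- `x` is an immersion on `U`: the partial derivatives are linearly independent. -/
def Immersed (x : Param → Vec3) (U : Set Param) : Prop :=
  ∀ u ∈ U, LinearIndependent ℝ ![pd 0 x u, pd 1 x u]

/-- `f` is nonconstant on `U`. -/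
def NonconstOn (f : Param → Vec3) (U : Set Param) : Prop :=
  ¬ ∃ v : Vec3, ∀ u ∈ U, f u = v

/-!
On the Gauss map the operator `Δ^{II}` loses the inverse of `b`: the Weingarten equations turn
`√|det b| b^{ij} n_{/j}` into `-√|K| E^i`, where `E^1 = x_{/2} × n` and `E^2 = n × x_{/1}` are
tangent and `∂_i E^i = 2H √(det g) n`. Hence `Δ^{II} n` has tangential part proportional to
`∂_i √|K| E^i` and normal part `2H n`, so `Δ^{II} n = λ n` says exactly that `K` is constant and
`2H = λ`.

Surfaces with constant `H` and `K ≠ 0` are spheres. The map `y = n + H x` has first fundamental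
form `(H² - K) g` by the identity `III = 2H b - K g`. If `H² ≠ K`, then `y` is an immersion
homothetic to `x` with the same normal `n`, and the Theorema Egregium makes the determinant of its
second fundamental form `(H² - K) det b`; but a direct computation gives `-(H² - K) det b`, which
is absurd. So `H² = K`, the map `y` is constant, and `x` has constant distance from `y / H`.
-/

section Calculus

open Set

variable {E F G W : Type*} [NormedAddCommGroup E] [NormedSpace ℝ E]
  [NormedAddCommGroup F] [NormedSpace ℝ F] [NormedAddCommGroup G] [NormedSpace ℝ G]
  [NormedAddCommGroup W] [NormedSpace ℝ W]

theorem contDiffOn_linearMap₂ [FiniteDimensional ℝ F] [FiniteDimensional ℝ G]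
    (B : F →ₗ[ℝ] G →ₗ[ℝ] W) {n : WithTop ℕ∞} {s : Set E} {f : E → F} {g : E → G}
    (hf : ContDiffOn ℝ n f s) (hg : ContDiffOn ℝ n g s) :
    ContDiffOn ℝ n (fun v => B (f v) (g v)) s :=
  (B.toContinuousBilinearMap.contDiff.comp_contDiffOn hf).clm_apply hg

theorem fderiv_linearMap₂_apply [FiniteDimensional ℝ F] [FiniteDimensional ℝ G]
    (B : F →ₗ[ℝ] G →ₗ[ℝ] W) {f : E → F} {g : E → G} {u : E}
    (hf : DifferentiableAt ℝ f u) (hg : DifferentiableAt ℝ g u) (e : E) :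
    fderiv ℝ (fun v => B (f v) (g v)) u e
      = B (fderiv ℝ f u e) (g u) + B (f u) (fderiv ℝ g u e) := by
  have h := B.toContinuousBilinearMap.fderiv_of_bilinear hf hg
  simp only [LinearMap.toContinuousBilinearMap_apply] at h
  simp [h, add_comm]

theorem contDiffOn_det {ι : Type*} [Fintype ι] [DecidableEq ι] {n : WithTop ℕ∞} {s : Set E}
    {A : E → Matrix ι ι ℝ} (hA : ∀ i j, ContDiffOn ℝ n (fun v => A v i j) s) :
    ContDiffOn ℝ n (fun v => (A v).det) s := by
  simp only [det_apply]
  exact ContDiffOn.sum fun σ _ => (contDiffOn_prod fun i _ => hA (σ i) i).const_smul _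

theorem contDiffOn_inv_apply {ι : Type*} [Fintype ι] [DecidableEq ι] {n : WithTop ℕ∞} {s : Set E}
    {A : E → Matrix ι ι ℝ} (hA : ∀ i j, ContDiffOn ℝ n (fun v => A v i j) s)
    (hdet : ∀ v ∈ s, (A v).det ≠ 0) (i j : ι) :
    ContDiffOn ℝ n (fun v => (A v)⁻¹ i j) s := by
  have hadj : ContDiffOn ℝ n (fun v => (A v).adjugate i j) s := by
    simp only [adjugate_apply]
    refine contDiffOn_det fun k l => ?_
    by_cases hk : k = j
    · simpa [hk] using contDiffOn_const
    · simpa [updateRow_ne hk] using hA k l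
  simpa [inv_def] using ((contDiffOn_det hA).inv hdet).mul hadj

theorem differentiableAt_of_contDiffOn {n : WithTop ℕ∞} {s : Set E} {f : E → F} {u : E}
    (hs : IsOpen s) (hf : ContDiffOn ℝ n f s) (hu : u ∈ s) (hn : n ≠ 0 := by simp) :
    DifferentiableAt ℝ f u :=
  (hf.contDiffAt (hs.mem_nhds hu)).differentiableAt hn

theorem exists_eq_const_of_fderiv_single_eq_zero {ι : Type*} [Finite ι] [DecidableEq ι]
    {s : Set (ι → ℝ)} (hs : IsOpen s) (hs' : IsPreconnected s) {f : (ι → ℝ) → E}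
    (hf : DifferentiableOn ℝ f s) (hf' : ∀ u ∈ s, ∀ i, fderiv ℝ f u (Pi.single i 1) = 0) :
    ∃ c, ∀ u ∈ s, f u = c := by
  cases nonempty_fintype ι
  refine hs.exists_is_const_of_fderiv_eq_zero hs' hf fun u hu => ?_
  refine ContinuousLinearMap.coe_injective (LinearMap.pi_ext' fun i => LinearMap.ext_ring ?_)
  simpa using hf' u hu i

theorem contDiffOn_dotProduct {ι : Type*} [Fintype ι] {n : WithTop ℕ∞} {s : Set E}
    {f g : E → ι → ℝ} (hf : ContDiffOn ℝ n f s) (hg : ContDiffOn ℝ n g s) :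
    ContDiffOn ℝ n (fun v => f v ⬝ᵥ g v) s :=
  contDiffOn_linearMap₂ (dotProductBilin ℝ ℝ) hf hg

theorem contDiffOn_cross {n : WithTop ℕ∞} {s : Set E} {f g : E → Fin 3 → ℝ}
    (hf : ContDiffOn ℝ n f s) (hg : ContDiffOn ℝ n g s) :
    ContDiffOn ℝ n (fun v => f v ⨯₃ g v) s :=
  contDiffOn_linearMap₂ crossProduct hf hg

variable {U : Set Param} {f g : Param → Vec3} {u : Param}

theorem contDiffOn_pd {m n : WithTop ℕ∞} (hU : IsOpen U) (hf : ContDiffOn ℝ n f U)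
    (hmn : m + 1 ≤ n) (i : Fin 2) : ContDiffOn ℝ m (pd i f) U :=
  (hf.fderiv_of_isOpen hU hmn).clm_apply contDiffOn_const

theorem pds_dotProduct (hf : DifferentiableAt ℝ f u) (hg : DifferentiableAt ℝ g u) (i : Fin 2) :
    pds i (fun v => f v ⬝ᵥ g v) u = pd i f u ⬝ᵥ g u + f u ⬝ᵥ pd i g u :=
  fderiv_linearMap₂_apply (dotProductBilin ℝ ℝ) hf hg _

theorem pd_cross (hf : DifferentiableAt ℝ f u) (hg : DifferentiableAt ℝ g u) (i : Fin 2) :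
    pd i (fun v => f v ⨯₃ g v) u = pd i f u ⨯₃ g u + f u ⨯₃ pd i g u :=
  fderiv_linearMap₂_apply crossProduct hf hg _

theorem pd_smul {φ : Param → ℝ} (hφ : DifferentiableAt ℝ φ u) (hf : DifferentiableAt ℝ f u)
    (i : Fin 2) : pd i (fun v => φ v • f v) u = pds i φ u • f u + φ u • pd i f u :=
  fderiv_linearMap₂_apply (LinearMap.lsmul ℝ Vec3) hφ hf _

theorem pd_neg_sum {ι : Type*} {s : Finset ι} {F : ι → Param → Vec3}
    (hF : ∀ j ∈ s, DifferentiableAt ℝ (F j) u) (i : Fin 2) :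
    pd i (fun v => -∑ j ∈ s, F j v) u = -∑ j ∈ s, pd i (F j) u := by
  simp only [pd]
  rw [fderiv_fun_neg, fderiv_fun_sum hF, _root_.neg_apply,
    _root_.sum_apply]

theorem pd_sub_const (c : Vec3) (i : Fin 2) : pd i (fun v => f v - c) u = pd i f u := by
  rw [pd, fderiv_sub_const, pd]

theorem pd_const_smul (hf : DifferentiableAt ℝ f u) (c : ℝ) (i : Fin 2) :
    pd i (fun v => c • f v) u = c • pd i f u := by
  rw [pd, fderiv_fun_const_smul hf, pd, _root_.smul_apply]

theorem pd_add_const_smul (hf : DifferentiableAt ℝ f u) (hg : DifferentiableAt ℝ g u) (c : ℝ)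
    (i : Fin 2) : pd i (fun v => f v + c • g v) u = pd i f u + c • pd i g u := by
  rw [← pd_const_smul hg, pd, fderiv_fun_add hf (hg.fun_const_smul c), _root_.add_apply, pd, pd]

theorem pd_congr (hU : IsOpen U) (h : EqOn f g U) (hu : u ∈ U) (i : Fin 2) :
    pd i f u = pd i g u := by
  simp only [pd, (h.eventuallyEq_of_mem (hU.mem_nhds hu)).fderiv_eq]

theorem pds_congr {φ ψ : Param → ℝ} (hU : IsOpen U) (h : EqOn φ ψ U) (hu : u ∈ U) (i : Fin 2) :
    pds i φ u = pds i ψ u := by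
  simp only [pds, (h.eventuallyEq_of_mem (hU.mem_nhds hu)).fderiv_eq]

theorem pds_eq_const_mul {φ ψ : Param → ℝ} {c : ℝ} (hU : IsOpen U)
    (h : ∀ v ∈ U, φ v = c * ψ v) (hu : u ∈ U) (i : Fin 2) : pds i φ u = c * pds i ψ u := by
  rw [pds_congr hU (ψ := c • ψ) h hu]
  simp [pds, fderiv_const_smul_field]

theorem pds_eq_zero_of_eqOn_const {φ : Param → ℝ} {c : ℝ} (hU : IsOpen U)
    (h : ∀ v ∈ U, φ v = c) (hu : u ∈ U) (i : Fin 2) : pds i φ u = 0 := by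
  rw [pds_congr hU (ψ := fun _ => c) h hu]
  simp [pds]

theorem pd_dotProduct_eq_neg {c : ℝ} (hU : IsOpen U) (hf : DifferentiableOn ℝ f U)
    (hg : DifferentiableOn ℝ g U) (h : ∀ v ∈ U, f v ⬝ᵥ g v = c) (hu : u ∈ U) (i : Fin 2) :
    pd i f u ⬝ᵥ g u = -(f u ⬝ᵥ pd i g u) := by
  rw [eq_neg_iff_add_eq_zero, ← pds_dotProduct (hf.differentiableAt (hU.mem_nhds hu))
    (hg.differentiableAt (hU.mem_nhds hu)), pds_eq_zero_of_eqOn_const hU h hu]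

theorem pd_pd_comm (hU : IsOpen U) (hf : ContDiffOn ℝ 2 f U) (hu : u ∈ U) (i j : Fin 2) :
    pd i (pd j f) u = pd j (pd i f) u := by
  have hdiff : DifferentiableAt ℝ (fderiv ℝ f) u :=
    ((hf.fderiv_of_isOpen (m := 1) hU (by norm_num)).contDiffAt
      (hU.mem_nhds hu)).differentiableAt one_ne_zero
  have hsecond : ∀ i j, pd i (pd j f) u
      = fderiv ℝ (fderiv ℝ f) u (Pi.single i 1) (Pi.single j 1) := fun i j => by
    change fderiv ℝ (fun v => fderiv ℝ f v (Pi.single j 1)) u (Pi.single i 1) = _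
    rw [fderiv_clm_apply hdiff (differentiableAt_const _)]
    simp
  rw [hsecond, hsecond]
  exact (hf.contDiffAt (hU.mem_nhds hu)).isSymmSndFDerivAt (by simp) _ _

end Calculus

section LinearAlgebra

theorem triple_product_mul_triple_product {R : Type*} [CommRing R] (a b c d e f : Fin 3 → R) :
    (a ⬝ᵥ b ⨯₃ c) * (d ⬝ᵥ e ⨯₃ f) = det (of fun i j => ![a, b, c] i ⬝ᵥ ![d, e, f] j) := by
  rw [triple_product_eq_det, triple_product_eq_det, ← det_transpose ![d, e, f]]
  exact (det_mul (of ![a, b, c]) (of ![d, e, f])ᵀ).symm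

theorem mul_self_fin_two {R : Type*} [CommRing R] (A : Matrix (Fin 2) (Fin 2) R) :
    A * A = A.trace • A - A.det • 1 := by
  ext i j
  fin_cases i <;> fin_cases j <;>
    simp only [mul_apply, Fin.sum_univ_two, trace_fin_two, det_fin_two, Matrix.sub_apply,
      Matrix.smul_apply, smul_eq_mul, one_fin_two, of_apply, cons_val', cons_val, Fin.zero_eta,
      Fin.mk_one] <;> ring

theorem det_smul_one_sub_smul_fin_two {R : Type*} [CommRing R] (A : Matrix (Fin 2) (Fin 2) R)
    (r s : R) : det (r • 1 - s • A) = r ^ 2 - r * s * A.trace + s ^ 2 * A.det := by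
  simp only [trace_fin_two, det_fin_two, Matrix.sub_apply, Matrix.smul_apply, smul_eq_mul,
    one_fin_two, of_apply, cons_val', cons_val]
  ring

/-- `ν` is one of the two unit normals of the plane spanned by `a` and `b`. -/
structure IsUnitNormal (a b ν : Vec3) : Prop where
  dotProduct_self : ν ⬝ᵥ ν = 1
  left : a ⬝ᵥ ν = 0
  right : b ⬝ᵥ ν = 0

namespace IsUnitNormal

variable {a b ν : Vec3}

theorem triple_product_sq (hν : IsUnitNormal a b ν) :
    (ν ⬝ᵥ a ⨯₃ b) ^ 2 = a ⨯₃ b ⬝ᵥ a ⨯₃ b := by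
  have ha : ν ⬝ᵥ a = 0 := by rw [dotProduct_comm, hν.left]
  have hb : ν ⬝ᵥ b = 0 := by rw [dotProduct_comm, hν.right]
  rw [sq, triple_product_mul_triple_product, det_fin_three, cross_dot_cross]
  simp [hν.dotProduct_self, hν.left, hν.right, ha, hb]

theorem eq_zero_of_orthogonal (hν : IsUnitNormal a b ν) (hab : LinearIndependent ℝ ![a, b])
    {v : Vec3} (ha : a ⬝ᵥ v = 0) (hb : b ⬝ᵥ v = 0) (hn : ν ⬝ᵥ v = 0) : v = 0 := by
  have hdet : det ![ν, a, b] ≠ 0 := by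
    rw [← triple_product_eq_det, ← sq_eq_zero_iff.ne, hν.triple_product_sq, Ne,
      dotProduct_self_eq_zero]
    exact crossProduct_ne_zero_iff_linearIndependent.2 hab
  refine eq_zero_of_mulVec_eq_zero hdet (funext fun i => ?_)
  fin_cases i
  exacts [hn, ha, hb]

theorem cross_eq (hν : IsUnitNormal a b ν) (hab : LinearIndependent ℝ ![a, b]) :
    a ⨯₃ b = (ν ⬝ᵥ a ⨯₃ b) • ν := by
  refine sub_eq_zero.1 (hν.eq_zero_of_orthogonal hab ?_ ?_ ?_) <;>
    simp [dotProduct_sub, hν.dotProduct_self, hν.left, hν.right]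

protected theorem triple_product_mul_triple_product (hν : IsUnitNormal a b ν)
    (hab : LinearIndependent ℝ ![a, b]) (s t : Vec3) :
    (s ⬝ᵥ a ⨯₃ b) * (t ⬝ᵥ a ⨯₃ b) = (a ⨯₃ b ⬝ᵥ a ⨯₃ b) * ((s ⬝ᵥ ν) * (t ⬝ᵥ ν)) := by
  have hdot : ∀ w, w ⬝ᵥ a ⨯₃ b = (ν ⬝ᵥ a ⨯₃ b) * (w ⬝ᵥ ν) := fun w => by
    conv_lhs => rw [hν.cross_eq hab, dotProduct_smul, smul_eq_mul]
  rw [hdot s, hdot t, ← hν.triple_product_sq]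
  ring

end IsUnitNormal

end LinearAlgebra

/-- The matrix `b_{ik} g^{kj}` of the shape operator in the frame `x_{/1}, x_{/2}`. -/
def shapeMatrix (x : Param → Vec3) (u : Param) : Matrix (Fin 2) (Fin 2) ℝ :=
  fformII x u * (fformI x u)⁻¹

/-- The area element `‖x_{/1} × x_{/2}‖`, equal to `√(det g)`. -/
def areaElement (x : Param → Vec3) (u : Param) : ℝ :=
  norm3 (pd 0 x u ⨯₃ pd 1 x u)

/-- The frame dual to `x_{/1}, x_{/2}` in the tangent plane, multiplied by the area element so
that it is bilinear in the first derivatives of `x` and the Gauss map. -/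
def areaDualFrame (x : Param → Vec3) (i : Fin 2) (u : Param) : Vec3 :=
  ![pd 1 x u ⨯₃ gaussMap x u, gaussMap x u ⨯₃ pd 0 x u] i

/-- The second fundamental form of `x` at `u` computed with an arbitrary vector `ν` in place of
the Gauss map. -/
def secondFormAlong (x : Param → Vec3) (ν : Vec3) (u : Param) : Matrix (Fin 2) (Fin 2) ℝ :=
  of fun i j => pd i (pd j x) u ⬝ᵥ ν

section PointwiseForms

variable {x : Param → Vec3} {u : Param}

theorem fformI_apply (i j : Fin 2) : fformI x u i j = pd i x u ⬝ᵥ pd j x u := rfl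

theorem fformIII_apply (i j : Fin 2) :
    fformIII x u i j = pd i (gaussMap x) u ⬝ᵥ pd j (gaussMap x) u := rfl

theorem fformII_eq_secondFormAlong : fformII x u = secondFormAlong x (gaussMap x u) u := rfl

theorem norm3_sq (a : Vec3) : norm3 a ^ 2 = a ⬝ᵥ a :=
  Real.sq_sqrt (show 0 ≤ a ⬝ᵥ a by simpa using dotProduct_self_star_nonneg a)

theorem norm3_smul (c : ℝ) (a : Vec3) : norm3 (c • a) = |c| * norm3 a := by
  change √(c • a ⬝ᵥ c • a) = |c| * √(a ⬝ᵥ a)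
  rw [smul_dotProduct, dotProduct_smul, smul_smul, smul_eq_mul,
    Real.sqrt_mul (mul_self_nonneg c), Real.sqrt_mul_self_eq_abs]

theorem isSymm_fformI : (fformI x u).IsSymm :=
  IsSymm.ext fun i j => dotProduct_comm (pd j x u) (pd i x u)

theorem det_fformI_eq_dotProduct_cross :
    (fformI x u).det = pd 0 x u ⨯₃ pd 1 x u ⬝ᵥ pd 0 x u ⨯₃ pd 1 x u := by
  rw [det_fin_two, cross_dot_cross]
  rfl

theorem det_fformI : (fformI x u).det = areaElement x u ^ 2 := by
  rw [areaElement, norm3_sq, det_fformI_eq_dotProduct_cross]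

theorem areaElement_pos (hind : LinearIndependent ℝ ![pd 0 x u, pd 1 x u]) :
    0 < areaElement x u := by
  have hpos : 0 < pd 0 x u ⨯₃ pd 1 x u ⬝ᵥ pd 0 x u ⨯₃ pd 1 x u := by
    simpa using dotProduct_self_star_pos_iff.2
      (crossProduct_ne_zero_iff_linearIndependent.2 hind)
  exact Real.sqrt_pos.2 hpos

theorem det_fformI_pos (hind : LinearIndependent ℝ ![pd 0 x u, pd 1 x u]) :
    0 < (fformI x u).det := by
  rw [det_fformI]
  exact pow_pos (areaElement_pos hind) 2

theorem linearIndependent_of_det_fformI_ne_zero (h : (fformI x u).det ≠ 0) :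
    LinearIndependent ℝ ![pd 0 x u, pd 1 x u] := by
  rw [← crossProduct_ne_zero_iff_linearIndependent]
  contrapose! h
  rw [det_fformI_eq_dotProduct_cross, h, zero_dotProduct]

theorem cross_eq_areaElement_smul_gaussMap
    (hind : LinearIndependent ℝ ![pd 0 x u, pd 1 x u]) :
    pd 0 x u ⨯₃ pd 1 x u = areaElement x u • gaussMap x u :=
  (smul_inv_smul₀ (areaElement_pos hind).ne' _).symm

theorem norm3_gaussMap (hind : LinearIndependent ℝ ![pd 0 x u, pd 1 x u]) :
    norm3 (gaussMap x u) = 1 := by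
  have hm := areaElement_pos hind
  rw [gaussMap, ← areaElement, norm3_smul, abs_of_pos (inv_pos.2 hm)]
  exact inv_mul_cancel₀ hm.ne'

theorem isUnitNormal_gaussMap (hind : LinearIndependent ℝ ![pd 0 x u, pd 1 x u]) :
    IsUnitNormal (pd 0 x u) (pd 1 x u) (gaussMap x u) where
  dotProduct_self := by rw [← norm3_sq, norm3_gaussMap hind, one_pow]
  left := by rw [gaussMap, dotProduct_smul, dot_self_cross, smul_zero]
  right := by rw [gaussMap, dotProduct_smul, dot_cross_self, smul_zero]

theorem pd_dotProduct_gaussMap (hind : LinearIndependent ℝ ![pd 0 x u, pd 1 x u]) (i : Fin 2) :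
    pd i x u ⬝ᵥ gaussMap x u = 0 := by
  fin_cases i
  exacts [(isUnitNormal_gaussMap hind).left, (isUnitNormal_gaussMap hind).right]

theorem shapeMatrix_mul_fformI (hind : LinearIndependent ℝ ![pd 0 x u, pd 1 x u]) :
    shapeMatrix x u * fformI x u = fformII x u :=
  nonsing_inv_mul_cancel_right _ _ (det_fformI_pos hind).ne'.isUnit

theorem meanCurv_eq_trace_shapeMatrix : 2 * meanCurv x u = (shapeMatrix x u).trace := by
  have hsymm : ((fformI x u)⁻¹)ᵀ = (fformI x u)⁻¹ := by
    rw [transpose_nonsing_inv, isSymm_fformI.eq]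
  rw [shapeMatrix, ← hsymm, ← sum_hadamard_eq]
  simp only [meanCurv, hadamard_apply, mul_comm (fformII x u _ _)]
  ring

theorem gaussCurv_eq_det_shapeMatrix : gaussCurv x u = (shapeMatrix x u).det := by
  rw [gaussCurv, shapeMatrix, det_mul, det_nonsing_inv, Ring.inverse_eq_inv', div_eq_mul_inv]

theorem det_fformII (hind : LinearIndependent ℝ ![pd 0 x u, pd 1 x u]) :
    (fformII x u).det = gaussCurv x u * (fformI x u).det :=
  (div_mul_cancel₀ _ (det_fformI_pos hind).ne').symm

theorem areaElement_smul_areaDualFrame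
    (hind : LinearIndependent ℝ ![pd 0 x u, pd 1 x u]) (i : Fin 2) :
    areaElement x u • areaDualFrame x i u = ∑ k, (fformI x u).adjugate i k • pd k x u := by
  have hcross := cross_eq_areaElement_smul_gaussMap hind
  fin_cases i
  · calc areaElement x u • (pd 1 x u ⨯₃ gaussMap x u)
        = pd 1 x u ⨯₃ (pd 0 x u ⨯₃ pd 1 x u) := by rw [hcross, map_smul]
      _ = _ := by
        simp [cross_cross_eq_smul_sub_smul', adjugate_fin_two, fformI_apply, sub_eq_add_neg]
  · calc areaElement x u • (gaussMap x u ⨯₃ pd 0 x u)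
        = (pd 0 x u ⨯₃ pd 1 x u) ⨯₃ pd 0 x u := by
          rw [hcross, map_smul, LinearMap.smul_apply]
      _ = _ := by
        simp [cross_cross_eq_smul_sub_smul, adjugate_fin_two, fformI_apply, sub_eq_neg_add]

theorem areaDualFrame_eq_areaElement_smul
    (hind : LinearIndependent ℝ ![pd 0 x u, pd 1 x u]) (i : Fin 2) :
    areaDualFrame x i u = areaElement x u • ∑ k, (fformI x u)⁻¹ i k • pd k x u := by
  have hm := (areaElement_pos hind).ne'
  refine smul_right_injective Vec3 hm ?_
  have hinv : ∀ k, (fformI x u).adjugate i k = areaElement x u ^ 2 * (fformI x u)⁻¹ i k := by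
    intro k
    rw [inv_def, Ring.inverse_eq_inv', det_fformI, Matrix.smul_apply, smul_eq_mul,
      mul_inv_cancel_left₀ (pow_ne_zero 2 hm)]
  simp only [areaElement_smul_areaDualFrame hind, hinv, Finset.smul_sum, smul_smul, sq, mul_assoc]

theorem areaDualFrame_dotProduct_pd
    (hind : LinearIndependent ℝ ![pd 0 x u, pd 1 x u]) (i j : Fin 2) :
    areaDualFrame x i u ⬝ᵥ pd j x u = areaElement x u * (1 : Matrix (Fin 2) (Fin 2) ℝ) i j := by
  rw [areaDualFrame_eq_areaElement_smul hind, smul_dotProduct, sum_dotProduct,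
    ← nonsing_inv_mul _ (det_fformI_pos hind).ne'.isUnit, mul_apply, smul_eq_mul]
  simp only [smul_dotProduct, smul_eq_mul, fformI_apply]

theorem areaDualFrame_dotProduct_gaussMap (i : Fin 2) :
    areaDualFrame x i u ⬝ᵥ gaussMap x u = 0 := by
  fin_cases i <;> simp [areaDualFrame, dotProduct_comm _ (gaussMap x u)]

end PointwiseForms

/-- A smooth parametrized surface: a smooth immersion of an open set `U ⊆ ℝ²` into `ℝ³`. -/
structure IsRegularSurface (U : Set Param) (x : Param → Vec3) : Prop where
  isOpen : IsOpen U
  contDiffOn : ContDiffOn ℝ (⊤ : ℕ∞) x U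
  immersed : Immersed x U

namespace IsRegularSurface

variable {U : Set Param} {x : Param → Vec3} {u : Param}

protected theorem contDiffOn_pd (hS : IsRegularSurface U x) (i : Fin 2) :
    ContDiffOn ℝ (⊤ : ℕ∞) (pd i x) U :=
  contDiffOn_pd hS.isOpen hS.contDiffOn (by simp) i

theorem contDiffOn_gaussMap (hS : IsRegularSurface U x) :
    ContDiffOn ℝ (⊤ : ℕ∞) (gaussMap x) U := by
  have hcross := contDiffOn_cross (hS.contDiffOn_pd 0) (hS.contDiffOn_pd 1)
  have hsq : ∀ v ∈ U, pd 0 x v ⨯₃ pd 1 x v ⬝ᵥ pd 0 x v ⨯₃ pd 1 x v ≠ 0 := fun v hv => by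
    rw [← det_fformI_eq_dotProduct_cross]
    exact (det_fformI_pos (hS.immersed v hv)).ne'
  have hnorm : ContDiffOn ℝ (⊤ : ℕ∞) (areaElement x) U :=
    (contDiffOn_dotProduct hcross hcross).sqrt hsq
  exact (hnorm.inv fun v hv => (areaElement_pos (hS.immersed v hv)).ne').smul hcross

theorem contDiffOn_pd_gaussMap (hS : IsRegularSurface U x) (i : Fin 2) :
    ContDiffOn ℝ (⊤ : ℕ∞) (pd i (gaussMap x)) U :=
  contDiffOn_pd hS.isOpen hS.contDiffOn_gaussMap (by simp) i

theorem contDiffOn_fformI_apply (hS : IsRegularSurface U x) (i j : Fin 2) :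
    ContDiffOn ℝ (⊤ : ℕ∞) (fun v => fformI x v i j) U :=
  contDiffOn_dotProduct (hS.contDiffOn_pd i) (hS.contDiffOn_pd j)

theorem contDiffOn_fformII_apply (hS : IsRegularSurface U x) (i j : Fin 2) :
    ContDiffOn ℝ (⊤ : ℕ∞) (fun v => fformII x v i j) U :=
  contDiffOn_dotProduct (contDiffOn_pd hS.isOpen (hS.contDiffOn_pd j) (by simp) i)
    hS.contDiffOn_gaussMap

theorem contDiffOn_gaussCurv (hS : IsRegularSurface U x) :
    ContDiffOn ℝ (⊤ : ℕ∞) (gaussCurv x) U :=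
  (contDiffOn_det hS.contDiffOn_fformII_apply).div (contDiffOn_det hS.contDiffOn_fformI_apply)
    fun v hv => (det_fformI_pos (hS.immersed v hv)).ne'

theorem contDiffOn_areaDualFrame (hS : IsRegularSurface U x) (i : Fin 2) :
    ContDiffOn ℝ (⊤ : ℕ∞) (areaDualFrame x i) U := by
  fin_cases i
  exacts [contDiffOn_cross (hS.contDiffOn_pd 1) hS.contDiffOn_gaussMap,
    contDiffOn_cross hS.contDiffOn_gaussMap (hS.contDiffOn_pd 0)]

theorem pd_gaussMap_dotProduct_gaussMap (hS : IsRegularSurface U x) (hu : u ∈ U) (i : Fin 2) :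
    pd i (gaussMap x) u ⬝ᵥ gaussMap x u = 0 := by
  have hdiff := hS.contDiffOn_gaussMap.differentiableOn (by simp)
  have h := pd_dotProduct_eq_neg hS.isOpen hdiff hdiff
    (fun v hv => (isUnitNormal_gaussMap (hS.immersed v hv)).dotProduct_self) hu i
  rw [dotProduct_comm (gaussMap x u)] at h
  exact self_eq_neg.1 h

theorem pd_gaussMap_dotProduct_pd (hS : IsRegularSurface U x) (hu : u ∈ U) (i j : Fin 2) :
    pd i (gaussMap x) u ⬝ᵥ pd j x u = -fformII x u i j := by
  rw [pd_dotProduct_eq_neg hS.isOpen (hS.contDiffOn_gaussMap.differentiableOn (by simp))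
    ((hS.contDiffOn_pd j).differentiableOn (by simp)) (c := 0) (fun v hv => by
      rw [dotProduct_comm, pd_dotProduct_gaussMap (hS.immersed v hv)]) hu, dotProduct_comm]
  rfl

theorem isSymm_fformII (hS : IsRegularSurface U x) (hu : u ∈ U) : (fformII x u).IsSymm :=
  IsSymm.ext fun i j => by
    rw [fformII_eq_secondFormAlong, secondFormAlong, of_apply, of_apply,
      pd_pd_comm hS.isOpen (contDiffOn_infty.1 hS.contDiffOn 2) hu]

theorem pd_gaussMap (hS : IsRegularSurface U x) (hu : u ∈ U) (i : Fin 2) :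
    pd i (gaussMap x) u = -∑ k, shapeMatrix x u i k • pd k x u := by
  have hind := hS.immersed u hu
  have htangent : ∀ j, pd j x u ⬝ᵥ
      (pd i (gaussMap x) u + ∑ k, shapeMatrix x u i k • pd k x u) = 0 := fun j => by
    rw [dotProduct_comm, add_dotProduct, hS.pd_gaussMap_dotProduct_pd hu, neg_add_eq_zero,
      ← shapeMatrix_mul_fformI hind, mul_apply, sum_dotProduct]
    simp only [smul_dotProduct, smul_eq_mul, fformI_apply]
  refine eq_neg_of_add_eq_zero_left
    ((isUnitNormal_gaussMap hind).eq_zero_of_orthogonal hind (htangent 0) (htangent 1) ?_)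
  rw [dotProduct_comm, add_dotProduct, hS.pd_gaussMap_dotProduct_gaussMap hu, sum_dotProduct]
  simp [smul_dotProduct, pd_dotProduct_gaussMap hind]

theorem fformIII_eq (hS : IsRegularSurface U x) (hu : u ∈ U) :
    fformIII x u = (2 * meanCurv x u) • fformII x u - gaussCurv x u • fformI x u := by
  have hshape := shapeMatrix_mul_fformI (hS.immersed u hu)
  have hIII : fformIII x u = shapeMatrix x u * fformII x u := by
    ext i j
    rw [fformIII_apply, hS.pd_gaussMap hu i, neg_dotProduct, sum_dotProduct, mul_apply,
      ← Finset.sum_neg_distrib]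
    refine Finset.sum_congr rfl fun k _ => ?_
    rw [smul_dotProduct, dotProduct_comm, hS.pd_gaussMap_dotProduct_pd hu,
      (hS.isSymm_fformII hu).apply, smul_eq_mul, mul_neg, neg_neg]
  rw [hIII, ← hshape, ← Matrix.mul_assoc, mul_self_fin_two, meanCurv_eq_trace_shapeMatrix,
    gaussCurv_eq_det_shapeMatrix, Matrix.sub_mul, Matrix.smul_mul, Matrix.smul_mul, Matrix.one_mul]

theorem sum_inv_fformII_smul_pd_gaussMap (hS : IsRegularSurface U x) (hu : u ∈ U)
    (hdet : (fformII x u).det ≠ 0) (i : Fin 2) :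
    ∑ j, (fformII x u)⁻¹ i j • pd j (gaussMap x) u = -∑ k, (fformI x u)⁻¹ i k • pd k x u := by
  have hinv : (fformII x u)⁻¹ * shapeMatrix x u = (fformI x u)⁻¹ :=
    nonsing_inv_mul_cancel_left _ _ hdet.isUnit
  simp only [hS.pd_gaussMap hu, ← hinv, mul_apply, smul_neg, Finset.smul_sum, smul_smul,
    Finset.sum_smul, Finset.sum_neg_distrib]
  rw [Finset.sum_comm]

theorem sqrt_abs_det_fformII (hS : IsRegularSurface U x) (hu : u ∈ U) :
    √|(fformII x u).det| = √|gaussCurv x u| * areaElement x u := by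
  have hind := hS.immersed u hu
  rw [det_fformII hind, det_fformI, abs_mul, abs_sq, Real.sqrt_mul (abs_nonneg _),
    Real.sqrt_sq (areaElement_pos hind).le]

theorem sum_smul_pd_gaussMap_eq_areaDualFrame (hS : IsRegularSurface U x) (hu : u ∈ U)
    (hdet : (fformII x u).det ≠ 0) (i : Fin 2) :
    ∑ j, (√|(fformII x u).det| * (fformII x u)⁻¹ i j) • pd j (gaussMap x) u
      = -(√|gaussCurv x u| • areaDualFrame x i u) := by
  rw [areaDualFrame_eq_areaElement_smul (hS.immersed u hu), smul_smul,
    ← hS.sqrt_abs_det_fformII hu, ← smul_neg, ← hS.sum_inv_fformII_smul_pd_gaussMap hu hdet]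
  simp only [mul_smul, Finset.smul_sum]

theorem sum_pd_areaDualFrame (hS : IsRegularSurface U x) (hu : u ∈ U) :
    ∑ i, pd i (areaDualFrame x i) u = (2 * meanCurv x u * areaElement x u) • gaussMap x u := by
  have hx := fun i => differentiableAt_of_contDiffOn hS.isOpen (hS.contDiffOn_pd i) hu
  have hn := differentiableAt_of_contDiffOn hS.isOpen hS.contDiffOn_gaussMap hu
  have hmixed : pd 1 (pd 0 x) u = pd 0 (pd 1 x) u :=
    pd_pd_comm hS.isOpen (contDiffOn_infty.1 hS.contDiffOn 2) hu 1 0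
  have hzero : pd 0 (areaDualFrame x 0) u
      = pd 0 (pd 1 x) u ⨯₃ gaussMap x u + pd 1 x u ⨯₃ pd 0 (gaussMap x) u := pd_cross (hx 1) hn 0
  have hone : pd 1 (areaDualFrame x 1) u
      = pd 1 (gaussMap x) u ⨯₃ pd 0 x u + gaussMap x u ⨯₃ pd 1 (pd 0 x) u := pd_cross hn (hx 0) 1
  have hanti := cross_anticomm (pd 1 x u) (pd 0 x u)
  rw [Fin.sum_univ_two, hzero, hone, hmixed, ← cross_anticomm (gaussMap x u),
    hS.pd_gaussMap hu, hS.pd_gaussMap hu, mul_smul,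
    ← cross_eq_areaElement_smul_gaussMap (hS.immersed u hu), meanCurv_eq_trace_shapeMatrix,
    trace_fin_two, ← hanti]
  simp only [Fin.sum_univ_two, map_neg, map_add, map_smul, LinearMap.neg_apply,
    LinearMap.add_apply, LinearMap.smul_apply, cross_self]
  module

theorem differentiableAt_sqrt_abs_gaussCurv (hS : IsRegularSurface U x) (hu : u ∈ U)
    (hK : gaussCurv x u ≠ 0) : DifferentiableAt ℝ (fun v => √|gaussCurv x v|) u :=
  ((differentiableAt_of_contDiffOn hS.isOpen hS.contDiffOn_gaussCurv hu).abs hK).sqrt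
    (abs_ne_zero.2 hK)

theorem gaussCurv_ne_zero (hS : IsRegularSurface U x) (hu : u ∈ U)
    (hdet : (fformII x u).det ≠ 0) : gaussCurv x u ≠ 0 :=
  div_ne_zero hdet (det_fformI_pos (hS.immersed u hu)).ne'

theorem differentiableAt_smul_pd_gaussMap (hS : IsRegularSurface U x)
    (hdet : ∀ v ∈ U, (fformII x v).det ≠ 0) (hu : u ∈ U) (i j : Fin 2) :
    DifferentiableAt ℝ
      (fun v => (√|(fformII x v).det| * (fformII x v)⁻¹ i j) • pd j (gaussMap x) v) u := by
  have hb : DifferentiableAt ℝ (fun v => (fformII x v).det) u :=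
    differentiableAt_of_contDiffOn hS.isOpen (contDiffOn_det hS.contDiffOn_fformII_apply) hu
  have hinv : DifferentiableAt ℝ (fun v => (fformII x v)⁻¹ i j) u :=
    differentiableAt_of_contDiffOn hS.isOpen
      (contDiffOn_inv_apply hS.contDiffOn_fformII_apply hdet i j) hu
  have hn : DifferentiableAt ℝ (pd j (gaussMap x)) u :=
    differentiableAt_of_contDiffOn hS.isOpen (hS.contDiffOn_pd_gaussMap j) hu
  exact (((hb.abs (hdet u hu)).sqrt (abs_ne_zero.2 (hdet u hu))).mul hinv).smul hn

theorem sum_pd_smul_pd_gaussMap (hS : IsRegularSurface U x)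
    (hdet : ∀ v ∈ U, (fformII x v).det ≠ 0) (hu : u ∈ U) (i : Fin 2) :
    ∑ j, pd i (fun v => (√|(fformII x v).det| * (fformII x v)⁻¹ i j) • pd j (gaussMap x) v) u
      = -(pds i (fun v => √|gaussCurv x v|) u • areaDualFrame x i u
        + √|gaussCurv x u| • pd i (areaDualFrame x i) u) := by
  rw [← pd_smul (hS.differentiableAt_sqrt_abs_gaussCurv hu (hS.gaussCurv_ne_zero hu (hdet u hu)))
    (differentiableAt_of_contDiffOn hS.isOpen (hS.contDiffOn_areaDualFrame i) hu),
    ← neg_eq_iff_eq_neg,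
    ← pd_neg_sum fun j _ => hS.differentiableAt_smul_pd_gaussMap hdet hu i j]
  refine pd_congr hS.isOpen (fun v hv => ?_) hu i
  rw [hS.sum_smul_pd_gaussMap_eq_areaDualFrame hv (hdet v hv), neg_neg]

theorem beltrami2_fformII_gaussMap (hS : IsRegularSurface U x)
    (hdet : ∀ v ∈ U, (fformII x v).det ≠ 0) (hu : u ∈ U) :
    beltrami2 (fformII x) (gaussMap x) u
      = (√|(fformII x u).det|)⁻¹ •
          (∑ i, pds i (fun v => √|gaussCurv x v|) u • areaDualFrame x i u)
        + (2 * meanCurv x u) • gaussMap x u := by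
  have hpos := Real.sqrt_pos.2 (abs_pos.2 (hdet u hu))
  have hcancel : (√|(fformII x u).det|)⁻¹ * (√|gaussCurv x u|
      * (2 * meanCurv x u * areaElement x u)) = 2 * meanCurv x u := by
    rw [mul_left_comm √_, ← hS.sqrt_abs_det_fformII hu]
    field_simp
  simp only [beltrami2, hS.sum_pd_smul_pd_gaussMap hdet hu, Finset.sum_neg_distrib,
    Finset.sum_add_distrib, ← Finset.smul_sum, hS.sum_pd_areaDualFrame hu, smul_neg, neg_neg,
    smul_add, smul_smul, hcancel]

end IsRegularSurface

section TheoremaEgregium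

variable {U : Set Param} {x y : Param → Vec3} {u : Param}

theorem pds_fformI_apply (hU : IsOpen U) (hx : ContDiffOn ℝ 2 x U) (hu : u ∈ U)
    (i j k : Fin 2) :
    pds i (fun v => fformI x v j k) u
      = pd i (pd j x) u ⬝ᵥ pd k x u + pd j x u ⬝ᵥ pd i (pd k x) u := by
  have hdiff := fun l => differentiableAt_of_contDiffOn hU
    (contDiffOn_pd (m := 1) hU hx (by norm_num) l) hu
  exact pds_dotProduct (hdiff j) (hdiff k) i

theorem two_mul_pd_pd_dotProduct_pd (hU : IsOpen U) (hx : ContDiffOn ℝ 2 x U) (hu : u ∈ U)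
    (i j k : Fin 2) :
    2 * (pd i (pd j x) u ⬝ᵥ pd k x u)
      = pds i (fun v => fformI x v j k) u + pds j (fun v => fformI x v i k) u
        - pds k (fun v => fformI x v i j) u := by
  simp only [pds_fformI_apply hU hx hu]
  rw [pd_pd_comm hU hx hu j i, pd_pd_comm hU hx hu k i, pd_pd_comm hU hx hu k j,
    dotProduct_comm (pd j x u), dotProduct_comm (pd i x u)]
  ring

theorem pd_pd_dotProduct_pd_pd_sub (hU : IsOpen U) (hx : ContDiffOn ℝ 3 x U) (hu : u ∈ U) :
    pd 0 (pd 0 x) u ⬝ᵥ pd 1 (pd 1 x) u - pd 0 (pd 1 x) u ⬝ᵥ pd 1 (pd 0 x) u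
      = pds 1 (fun v => pd 0 (pd 0 x) v ⬝ᵥ pd 1 x v) u
        - pds 0 (fun v => pd 1 (pd 0 x) v ⬝ᵥ pd 1 x v) u := by
  have hx' := fun i => contDiffOn_pd (m := 2) hU hx (by norm_num) i
  have hdiff := fun i => differentiableAt_of_contDiffOn hU (hx' i) hu
  have hdiff' := fun i j => differentiableAt_of_contDiffOn hU
    (contDiffOn_pd (m := 1) hU (hx' j) (by norm_num) i) hu
  rw [pds_dotProduct (hdiff' 0 0) (hdiff 1), pds_dotProduct (hdiff' 1 0) (hdiff 1),
    pd_pd_comm hU (hx' 0) hu 1 0, dotProduct_comm (pd 0 (pd 1 x) u)]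
  ring

/-- Brioschi's formula: with `two_mul_pd_pd_dotProduct_pd` and `pd_pd_dotProduct_pd_pd_sub`, the
right-hand side is determined by the first fundamental form. -/
theorem det_fformI_mul_det_secondFormAlong {ν : Vec3}
    (hind : LinearIndependent ℝ ![pd 0 x u, pd 1 x u])
    (hν : IsUnitNormal (pd 0 x u) (pd 1 x u) ν) :
    (fformI x u).det * (secondFormAlong x ν u).det =
      det !![pd 0 (pd 0 x) u ⬝ᵥ pd 1 (pd 1 x) u - pd 0 (pd 1 x) u ⬝ᵥ pd 1 (pd 0 x) u,
          pd 0 (pd 0 x) u ⬝ᵥ pd 0 x u, pd 0 (pd 0 x) u ⬝ᵥ pd 1 x u;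
        pd 1 (pd 1 x) u ⬝ᵥ pd 0 x u, fformI x u 0 0, fformI x u 0 1;
        pd 1 (pd 1 x) u ⬝ᵥ pd 1 x u, fformI x u 1 0, fformI x u 1 1]
      - det !![0, pd 0 (pd 1 x) u ⬝ᵥ pd 0 x u, pd 0 (pd 1 x) u ⬝ᵥ pd 1 x u;
        pd 1 (pd 0 x) u ⬝ᵥ pd 0 x u, fformI x u 0 0, fformI x u 0 1;
        pd 1 (pd 0 x) u ⬝ᵥ pd 1 x u, fformI x u 1 0, fformI x u 1 1] := by
  have hcomm := fun i j k => dotProduct_comm (pd i x u) (pd j (pd k x) u)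
  have hgram : ∀ s t, _ := hν.triple_product_mul_triple_product hind
  simp only [triple_product_mul_triple_product, det_fin_three] at hgram
  have hdiag := hgram (pd 0 (pd 0 x) u) (pd 1 (pd 1 x) u)
  have hoff := hgram (pd 0 (pd 1 x) u) (pd 1 (pd 0 x) u)
  simp only [of_apply, cons_val, hcomm] at hdiag hoff
  rw [det_fformI_eq_dotProduct_cross, det_fin_two, det_fin_three, det_fin_three]
  simp only [secondFormAlong, fformI_apply, of_apply, cons_val', cons_val]
  linear_combination hoff - hdiag

theorem pd_pd_dotProduct_pd_of_fformI_eq_smul {μ : ℝ} (hU : IsOpen U) (hx : ContDiffOn ℝ 2 x U)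
    (hy : ContDiffOn ℝ 2 y U) (hxy : ∀ v ∈ U, fformI y v = μ • fformI x v) (hu : u ∈ U)
    (i j k : Fin 2) :
    pd i (pd j y) u ⬝ᵥ pd k y u = μ * (pd i (pd j x) u ⬝ᵥ pd k x u) := by
  have hpds : ∀ l p q, pds l (fun v => fformI y v p q) u = μ * pds l (fun v => fformI x v p q) u :=
    fun l p q => pds_eq_const_mul hU (fun v hv => by rw [hxy v hv, Matrix.smul_apply, smul_eq_mul])
      hu l
  have hkoszul := two_mul_pd_pd_dotProduct_pd hU hy hu i j k
  rw [hpds, hpds, hpds] at hkoszul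
  linear_combination hkoszul / 2 - μ / 2 * two_mul_pd_pd_dotProduct_pd hU hx hu i j k

/-- The Theorema Egregium, for homothetic rather than isometric surfaces. -/
theorem det_secondFormAlong_of_fformI_eq_smul {μ : ℝ} (hμ : μ ≠ 0) (hU : IsOpen U)
    (hx : ContDiffOn ℝ 3 x U) (hy : ContDiffOn ℝ 3 y U)
    (hxy : ∀ v ∈ U, fformI y v = μ • fformI x v) (hu : u ∈ U)
    (hind : LinearIndependent ℝ ![pd 0 x u, pd 1 x u]) {ν ξ : Vec3}
    (hν : IsUnitNormal (pd 0 x u) (pd 1 x u) ν) (hξ : IsUnitNormal (pd 0 y u) (pd 1 y u) ξ) :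
    (secondFormAlong y ξ u).det = μ * (secondFormAlong x ν u).det := by
  have hdet : (fformI y u).det = μ ^ 2 * (fformI x u).det := by
    rw [hxy u hu, det_smul, Fintype.card_fin]
  have hg := (det_fformI_pos hind).ne'
  have hindy : LinearIndependent ℝ ![pd 0 y u, pd 1 y u] :=
    linearIndependent_of_det_fformI_ne_zero (hdet ▸ mul_ne_zero (pow_ne_zero 2 hμ) hg)
  have hchris : ∀ v ∈ U, ∀ i j k, _ := fun v hv => pd_pd_dotProduct_pd_of_fformI_eq_smul hU
    (hx.of_le (by norm_num)) (hy.of_le (by norm_num)) hxy hv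
  have hcurv : pd 0 (pd 0 y) u ⬝ᵥ pd 1 (pd 1 y) u - pd 0 (pd 1 y) u ⬝ᵥ pd 1 (pd 0 y) u
      = μ * (pd 0 (pd 0 x) u ⬝ᵥ pd 1 (pd 1 x) u - pd 0 (pd 1 x) u ⬝ᵥ pd 1 (pd 0 x) u) := by
    rw [pd_pd_dotProduct_pd_pd_sub hU hx hu, pd_pd_dotProduct_pd_pd_sub hU hy hu,
      pds_eq_const_mul hU (fun v hv => hchris v hv 0 0 1) hu,
      pds_eq_const_mul hU (fun v hv => hchris v hv 1 0 1) hu]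
    ring
  have hgaussx := det_fformI_mul_det_secondFormAlong hind hν
  have hgaussy := det_fformI_mul_det_secondFormAlong hindy hξ
  rw [hcurv, hdet, hxy u hu] at hgaussy
  simp only [hchris u hu] at hgaussy
  simp only [det_fin_three, of_apply, cons_val', cons_val, Matrix.smul_apply, smul_eq_mul]
    at hgaussx hgaussy
  refine mul_left_cancel₀ (mul_ne_zero (pow_ne_zero 2 hμ) hg) ?_
  linear_combination hgaussy - μ ^ 3 * hgaussx

end TheoremaEgregium

namespace IsRegularSurface

variable {U : Set Param} {x : Param → Vec3} {u : Param}

theorem pds_sqrt_abs_gaussCurv_eq_zero_of_beltrami2_eq {lam : ℝ} (hS : IsRegularSurface U x)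
    (hdet : ∀ v ∈ U, (fformII x v).det ≠ 0) (hu : u ∈ U)
    (hlam : beltrami2 (fformII x) (gaussMap x) u = lam • gaussMap x u) (j : Fin 2) :
    pds j (fun v => √|gaussCurv x v|) u = 0 := by
  have hind := hS.immersed u hu
  have hn : gaussMap x u ⬝ᵥ pd j x u = 0 := by
    rw [dotProduct_comm, pd_dotProduct_gaussMap hind]
  have h := congrArg (· ⬝ᵥ pd j x u) hlam
  simp only [hS.beltrami2_fformII_gaussMap hdet hu, add_dotProduct, smul_dotProduct,
    sum_dotProduct, areaDualFrame_dotProduct_pd hind, hn, one_apply, smul_eq_mul, mul_ite,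
    mul_one, mul_zero, add_zero, Finset.sum_ite_eq', Finset.mem_univ, if_true] at h
  have hsqrt := (Real.sqrt_pos.2 (abs_pos.2 (hdet u hu))).ne'
  simpa [hsqrt, (areaElement_pos hind).ne'] using h

theorem two_mul_meanCurv_of_beltrami2_eq {lam : ℝ} (hS : IsRegularSurface U x)
    (hdet : ∀ v ∈ U, (fformII x v).det ≠ 0) (hu : u ∈ U)
    (hlam : beltrami2 (fformII x) (gaussMap x) u = lam • gaussMap x u) :
    2 * meanCurv x u = lam := by
  have h := congrArg (· ⬝ᵥ gaussMap x u) hlam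
  simpa [hS.beltrami2_fformII_gaussMap hdet hu, add_dotProduct, smul_dotProduct,
    sum_dotProduct, areaDualFrame_dotProduct_gaussMap,
    (isUnitNormal_gaussMap (hS.immersed u hu)).dotProduct_self] using h

theorem exists_gaussCurv_eq_const_of_beltrami2_eq {lam : ℝ} (hS : IsRegularSurface U x)
    (hconn : IsPreconnected U) (hdet : ∀ v ∈ U, (fformII x v).det ≠ 0)
    (hlam : ∀ v ∈ U, beltrami2 (fformII x) (gaussMap x) v = lam • gaussMap x v) :
    ∃ k, ∀ v ∈ U, gaussCurv x v = k := by
  have hK := fun v hv => hS.gaussCurv_ne_zero hv (hdet v hv)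
  obtain ⟨c, hc⟩ := exists_eq_const_of_fderiv_single_eq_zero hS.isOpen hconn
    (fun v hv => (hS.differentiableAt_sqrt_abs_gaussCurv hv (hK v hv)).differentiableWithinAt)
    fun v hv => hS.pds_sqrt_abs_gaussCurv_eq_zero_of_beltrami2_eq hdet hv (hlam v hv)
  have habs : ∀ v ∈ U, |gaussCurv x v| = c ^ 2 := fun v hv => by
    rw [← hc v hv, Real.sq_sqrt (abs_nonneg _)]
  have hsq : ∀ v ∈ U, gaussCurv x v ^ 2 = (c ^ 2) ^ 2 := fun v hv => by rw [← habs v hv, sq_abs]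
  have hne : ∀ {v}, v ∈ U → c ^ 2 ≠ 0 := fun {v} hv => by
    rw [← habs v hv]
    exact abs_ne_zero.2 (hK v hv)
  rcases hconn.eq_or_eq_neg_of_sq_eq hS.contDiffOn_gaussCurv.continuousOn
    (continuousOn_const (c := c ^ 2)) hsq hne with h | h
  exacts [⟨_, h⟩, ⟨_, h⟩]

theorem pd_gaussMap_add_smul (hS : IsRegularSurface U x) (hu : u ∈ U) (c : ℝ) (i : Fin 2) :
    pd i (fun v => gaussMap x v + c • x v) u = pd i (gaussMap x) u + c • pd i x u :=
  pd_add_const_smul (differentiableAt_of_contDiffOn hS.isOpen hS.contDiffOn_gaussMap hu)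
    (differentiableAt_of_contDiffOn hS.isOpen hS.contDiffOn hu) c i

theorem isUnitNormal_gaussMap_add_smul (hS : IsRegularSurface U x) (hu : u ∈ U) (c : ℝ) :
    IsUnitNormal (pd 0 (fun v => gaussMap x v + c • x v) u)
      (pd 1 (fun v => gaussMap x v + c • x v) u) (gaussMap x u) := by
  have horth : ∀ i, pd i (fun v => gaussMap x v + c • x v) u ⬝ᵥ gaussMap x u = 0 := fun i => by
    rw [hS.pd_gaussMap_add_smul hu, add_dotProduct, smul_dotProduct,
      hS.pd_gaussMap_dotProduct_gaussMap hu, pd_dotProduct_gaussMap (hS.immersed u hu), smul_zero,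
      add_zero]
  exact ⟨(isUnitNormal_gaussMap (hS.immersed u hu)).dotProduct_self, horth 0, horth 1⟩

theorem fformI_gaussMap_add_smul (hS : IsRegularSurface U x) (hu : u ∈ U) (c : ℝ) :
    fformI (fun v => gaussMap x v + c • x v) u
      = fformIII x u - (2 * c) • fformII x u + c ^ 2 • fformI x u := by
  ext i j
  simp only [fformI_apply, hS.pd_gaussMap_add_smul hu, add_dotProduct, dotProduct_add,
    smul_dotProduct, dotProduct_smul, hS.pd_gaussMap_dotProduct_pd hu,
    dotProduct_comm (pd i x u) (pd j (gaussMap x) u), (hS.isSymm_fformII hu).apply i j,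
    Matrix.add_apply, Matrix.sub_apply, Matrix.smul_apply, fformIII_apply, smul_eq_mul]
  ring

theorem pd_pd_gaussMap_dotProduct_gaussMap (hS : IsRegularSurface U x) (hu : u ∈ U)
    (i j : Fin 2) : pd i (pd j (gaussMap x)) u ⬝ᵥ gaussMap x u = -fformIII x u i j := by
  have hdiff := hS.contDiffOn_gaussMap.differentiableOn (by simp)
  have hdiff' := (hS.contDiffOn_pd_gaussMap j).differentiableOn (by simp)
  rw [pd_dotProduct_eq_neg hS.isOpen hdiff' hdiff
    (fun v hv => hS.pd_gaussMap_dotProduct_gaussMap hv j) hu, dotProduct_comm, fformIII_apply]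

theorem secondFormAlong_gaussMap_add_smul (hS : IsRegularSurface U x) (hu : u ∈ U) (c : ℝ) :
    secondFormAlong (fun v => gaussMap x v + c • x v) (gaussMap x u) u
      = c • fformII x u - fformIII x u := by
  ext i j
  have hdiff : DifferentiableAt ℝ (pd j (gaussMap x)) u :=
    differentiableAt_of_contDiffOn hS.isOpen (hS.contDiffOn_pd_gaussMap j) hu
  have hdiff' := differentiableAt_of_contDiffOn hS.isOpen (hS.contDiffOn_pd j) hu
  rw [secondFormAlong, of_apply, pd_congr hS.isOpen
    (fun v hv => hS.pd_gaussMap_add_smul hv c j) hu, pd_add_const_smul hdiff hdiff',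
    add_dotProduct, smul_dotProduct, hS.pd_pd_gaussMap_dotProduct_gaussMap hu, neg_add_eq_sub]
  rfl

theorem det_secondFormAlong_gaussMap_add_meanCurv_smul (hS : IsRegularSurface U x) (hu : u ∈ U) :
    (secondFormAlong (fun v => gaussMap x v + meanCurv x u • x v) (gaussMap x u) u).det
      = (gaussCurv x u - meanCurv x u ^ 2) * (fformII x u).det := by
  have hind := hS.immersed u hu
  have hfactor : meanCurv x u • fformII x u - fformIII x u
      = (gaussCurv x u • 1 - meanCurv x u • shapeMatrix x u) * fformI x u := by
    rw [hS.fformIII_eq hu, Matrix.sub_mul, Matrix.smul_mul, Matrix.smul_mul, Matrix.one_mul,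
      shapeMatrix_mul_fformI hind]
    module
  rw [hS.secondFormAlong_gaussMap_add_smul hu, hfactor, det_mul, det_smul_one_sub_smul_fin_two,
    ← meanCurv_eq_trace_shapeMatrix, ← gaussCurv_eq_det_shapeMatrix, det_fformII hind]
  ring

theorem fformI_gaussMap_add_meanCurv_smul (hS : IsRegularSurface U x) (hu : u ∈ U) :
    fformI (fun v => gaussMap x v + meanCurv x u • x v) u
      = (meanCurv x u ^ 2 - gaussCurv x u) • fformI x u := by
  rw [hS.fformI_gaussMap_add_smul hu, hS.fformIII_eq hu]
  module

theorem gaussCurv_eq_sq_of_const {h k : ℝ} (hS : IsRegularSurface U x)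
    (hH : ∀ v ∈ U, meanCurv x v = h) (hK : ∀ v ∈ U, gaussCurv x v = k) (hu : u ∈ U)
    (hdet : (fformII x u).det ≠ 0) : k = h ^ 2 := by
  by_contra hne
  have hμ : h ^ 2 - k ≠ 0 := sub_ne_zero.2 (Ne.symm hne)
  have hsmooth : ContDiffOn ℝ (⊤ : ℕ∞) (fun v => gaussMap x v + h • x v) U :=
    hS.contDiffOn_gaussMap.add (hS.contDiffOn.const_smul h)
  have hhomothetic : ∀ v ∈ U, fformI (fun v => gaussMap x v + h • x v) v
      = (h ^ 2 - k) • fformI x v := fun v hv => by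
    simpa only [hH v hv, hK v hv] using hS.fformI_gaussMap_add_meanCurv_smul hv
  have hegregium := det_secondFormAlong_of_fformI_eq_smul hμ hS.isOpen
    (contDiffOn_infty.1 hS.contDiffOn 3) (contDiffOn_infty.1 hsmooth 3) hhomothetic hu
    (hS.immersed u hu) (isUnitNormal_gaussMap (hS.immersed u hu))
    (hS.isUnitNormal_gaussMap_add_smul hu h)
  have hflip := hS.det_secondFormAlong_gaussMap_add_meanCurv_smul hu
  rw [hH u hu, hK u hu, hegregium, ← fformII_eq_secondFormAlong] at hflip
  refine mul_ne_zero hμ hdet ?_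
  linear_combination hflip / 2

theorem exists_curvatures_eq_const_of_beltrami2_eq {lam : ℝ} (hS : IsRegularSurface U x)
    (hconn : IsConnected U) (hdet : ∀ v ∈ U, (fformII x v).det ≠ 0)
    (hlam : ∀ v ∈ U, beltrami2 (fformII x) (gaussMap x) v = lam • gaussMap x v) :
    ∃ h : ℝ, h ≠ 0 ∧ (∀ v ∈ U, meanCurv x v = h) ∧ ∀ v ∈ U, gaussCurv x v = h ^ 2 := by
  have hH : ∀ v ∈ U, meanCurv x v = lam / 2 := fun v hv => by
    linarith [hS.two_mul_meanCurv_of_beltrami2_eq hdet hv (hlam v hv)]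
  obtain ⟨k, hK⟩ :=
    hS.exists_gaussCurv_eq_const_of_beltrami2_eq hconn.isPreconnected hdet hlam
  obtain ⟨u, hu⟩ := hconn.nonempty
  obtain rfl : k = (lam / 2) ^ 2 := hS.gaussCurv_eq_sq_of_const hH hK hu (hdet u hu)
  refine ⟨lam / 2, fun hzero => hS.gaussCurv_ne_zero hu (hdet u hu) ?_, hH, hK⟩
  rw [hK u hu, hzero, zero_pow two_ne_zero]

theorem exists_norm3_sub_eq_of_gaussCurv_eq_sq {h : ℝ} (hS : IsRegularSurface U x)
    (hconn : IsPreconnected U) (hh : h ≠ 0) (hH : ∀ v ∈ U, meanCurv x v = h)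
    (hK : ∀ v ∈ U, gaussCurv x v = h ^ 2) :
    ∃ c : Vec3, ∃ r : ℝ, 0 < r ∧ ∀ v ∈ U, norm3 (x v - c) = r := by
  have hpd : ∀ v ∈ U, ∀ i, pd i (fun v => gaussMap x v + h • x v) v = 0 := fun v hv i => by
    have hI := hS.fformI_gaussMap_add_meanCurv_smul hv
    rw [hH v hv, hK v hv, sub_self, zero_smul] at hI
    exact dotProduct_self_eq_zero.1 (congrFun (congrFun hI i) i)
  obtain ⟨c, hc⟩ := exists_eq_const_of_fderiv_single_eq_zero hS.isOpen hconn
    ((hS.contDiffOn_gaussMap.add (hS.contDiffOn.const_smul h)).differentiableOn (by simp)) hpd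
  refine ⟨h⁻¹ • c, |h⁻¹|, abs_pos.2 (inv_ne_zero hh), fun v hv => ?_⟩
  have hx : x v - h⁻¹ • c = (-h⁻¹) • gaussMap x v := by
    rw [← hc v hv, smul_add, inv_smul_smul₀ hh]
    module
  rw [hx, norm3_smul, norm3_gaussMap (hS.immersed v hv), mul_one, abs_neg]

theorem eq_dotProduct_smul_gaussMap_of_norm3_sub_eq {c : Vec3} {r : ℝ}
    (hS : IsRegularSurface U x) (hsphere : ∀ v ∈ U, norm3 (x v - c) = r) (hu : u ∈ U) :
    x u - c = ((x u - c) ⬝ᵥ gaussMap x u) • gaussMap x u := by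
  have hind := hS.immersed u hu
  have hnormal := isUnitNormal_gaussMap hind
  have hdiff : DifferentiableOn ℝ (fun v => x v - c) U :=
    (hS.contDiffOn.differentiableOn (by simp)).sub_const c
  have hsq : ∀ v ∈ U, (x v - c) ⬝ᵥ (x v - c) = r ^ 2 := fun v hv => by
    rw [← norm3_sq, hsphere v hv]
  have horth : ∀ i, pd i x u ⬝ᵥ (x u - c) = 0 := fun i => by
    have h := pd_dotProduct_eq_neg hS.isOpen hdiff hdiff hsq hu i
    rw [dotProduct_comm (x u - c), self_eq_neg] at h
    rwa [pd_sub_const] at h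
  refine sub_eq_zero.1 (hnormal.eq_zero_of_orthogonal hind ?_ ?_ ?_)
  · rw [dotProduct_sub, horth, dotProduct_smul, hnormal.left, smul_zero, sub_zero]
  · rw [dotProduct_sub, horth, dotProduct_smul, hnormal.right, smul_zero, sub_zero]
  · rw [dotProduct_sub, dotProduct_smul, hnormal.dotProduct_self, dotProduct_comm, smul_eq_mul,
      mul_one, sub_self]

theorem exists_sub_eq_smul_gaussMap_of_norm3_sub_eq {c : Vec3} {r : ℝ}
    (hS : IsRegularSurface U x) (hconn : IsPreconnected U) (hr : r ≠ 0)
    (hsphere : ∀ v ∈ U, norm3 (x v - c) = r) :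
    ∃ s : ℝ, s ≠ 0 ∧ ∀ v ∈ U, x v - c = s • gaussMap x v := by
  have hrep := fun v hv => hS.eq_dotProduct_smul_gaussMap_of_norm3_sub_eq hsphere (u := v) hv
  have hsq : ∀ v ∈ U, ((x v - c) ⬝ᵥ gaussMap x v) ^ 2 = r ^ 2 := fun v hv => by
    rw [← hsphere v hv, hrep v hv, norm3_smul, norm3_gaussMap (hS.immersed v hv), mul_one, sq_abs,
      ← hrep v hv]
  have hcont : ContinuousOn (fun v => (x v - c) ⬝ᵥ gaussMap x v) U :=
    (contDiffOn_dotProduct (hS.contDiffOn.sub contDiffOn_const) hS.contDiffOn_gaussMap).continuousOn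
  rcases hconn.eq_or_eq_neg_of_sq_eq hcont (continuousOn_const (c := r)) hsq (fun _ => hr) with
    h | h
  · exact ⟨r, hr, fun v hv => (hrep v hv).trans (congrArg (· • gaussMap x v) (h hv))⟩
  · exact ⟨-r, neg_ne_zero.2 hr, fun v hv => (hrep v hv).trans (congrArg (· • gaussMap x v) (h hv))⟩

theorem shapeMatrix_of_sub_eq_smul_gaussMap {c : Vec3} {s : ℝ} (hS : IsRegularSurface U x)
    (hs : s ≠ 0) (hsphere : ∀ v ∈ U, x v - c = s • gaussMap x v) (hu : u ∈ U) :
    shapeMatrix x u = (-s⁻¹) • 1 := by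
  have hpd : ∀ i, pd i x u = s • pd i (gaussMap x) u := fun i => by
    have h := pd_congr hS.isOpen hsphere hu i
    rwa [pd_sub_const, pd_const_smul
      (differentiableAt_of_contDiffOn hS.isOpen hS.contDiffOn_gaussMap hu)] at h
  have hII : fformII x u = (-s⁻¹) • fformI x u := by
    ext i j
    rw [Matrix.smul_apply, fformI_apply, hpd i, smul_dotProduct,
      hS.pd_gaussMap_dotProduct_pd hu, smul_eq_mul, smul_eq_mul]
    field_simp
  rw [shapeMatrix, hII, Matrix.smul_mul,
    mul_nonsing_inv _ (det_fformI_pos (hS.immersed u hu)).ne'.isUnit]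

theorem beltrami2_of_sub_eq_smul_gaussMap {c : Vec3} {s : ℝ} (hS : IsRegularSurface U x)
    (hs : s ≠ 0) (hsphere : ∀ v ∈ U, x v - c = s • gaussMap x v) (hu : u ∈ U) :
    beltrami2 (fformII x) (gaussMap x) u = (-2 * s⁻¹) • gaussMap x u := by
  have hshape := fun v hv => hS.shapeMatrix_of_sub_eq_smul_gaussMap hs hsphere (u := v) hv
  have hK : ∀ v ∈ U, gaussCurv x v = (s⁻¹) ^ 2 := fun v hv => by
    rw [gaussCurv_eq_det_shapeMatrix, hshape v hv, det_smul, det_one, Fintype.card_fin, neg_sq,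
      mul_one]
  have hH : 2 * meanCurv x u = -2 * s⁻¹ := by
    rw [meanCurv_eq_trace_shapeMatrix, hshape u hu, trace_smul, trace_one, Fintype.card_fin,
      smul_eq_mul]
    push_cast
    ring
  have hdet : ∀ v ∈ U, (fformII x v).det ≠ 0 := fun v hv => by
    rw [det_fformII (hS.immersed v hv), hK v hv]
    exact mul_ne_zero (pow_ne_zero 2 (inv_ne_zero hs)) (det_fformI_pos (hS.immersed v hv)).ne'
  have hpds : ∀ i, pds i (fun v => √|gaussCurv x v|) u = 0 := fun i =>
    pds_eq_zero_of_eqOn_const hS.isOpen (fun v hv => by rw [hK v hv]) hu i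
  rw [hS.beltrami2_fformII_gaussMap hdet hu, hH]
  simp [hpds]

end IsRegularSurface

theorem stmt12_general (U : Set Param) (x : Param → Vec3)
    (hU : IsOpen U) (hUconn : IsConnected U)
    (hx : ContDiffOn ℝ (⊤ : ℕ∞) x U) (himm : Immersed x U)
    (hdet : ∀ u ∈ U, (fformII x u).det ≠ 0) :
    ((∃ lam : ℝ, lam ≠ 0 ∧
        ∀ u ∈ U, beltrami2 (fformII x) (gaussMap x) u = lam • gaussMap x u) ↔
      (∃ c : Vec3, ∃ r : ℝ, 0 < r ∧ ∀ u ∈ U, norm3 (x u - c) = r)) ∧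
    (∀ lam : ℝ,
      (∀ u ∈ U, beltrami2 (fformII x) (gaussMap x) u = lam • gaussMap x u) →
      ∃ h k : ℝ, h ≠ 0 ∧ k ≠ 0 ∧
        ∀ u ∈ U, meanCurv x u = h ∧ gaussCurv x u = k) := by
  have hS : IsRegularSurface U x := ⟨hU, hx, himm⟩
  refine ⟨⟨?_, ?_⟩, fun lam hlam => ?_⟩
  · rintro ⟨lam, -, hlam⟩
    obtain ⟨h, hh, hH, hK⟩ :=
      hS.exists_curvatures_eq_const_of_beltrami2_eq hUconn hdet hlam
    exact hS.exists_norm3_sub_eq_of_gaussCurv_eq_sq hUconn.isPreconnected hh hH hK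
  · rintro ⟨c, r, hr, hsphere⟩
    obtain ⟨s, hs, hsn⟩ :=
      hS.exists_sub_eq_smul_gaussMap_of_norm3_sub_eq hUconn.isPreconnected hr.ne' hsphere
    exact ⟨-2 * s⁻¹, by simpa using hs, fun u hu => hS.beltrami2_of_sub_eq_smul_gaussMap hs hsn hu⟩
  · obtain ⟨h, hh, hH, hK⟩ :=
      hS.exists_curvatures_eq_const_of_beltrami2_eq hUconn hdet hlam
    exact ⟨h, h ^ 2, hh, pow_ne_zero 2 hh, fun u hu => ⟨hH u hu, hK u hu⟩⟩

/-- Theorem 2.2: `Δ^{II} n = λ n` on `U` for some `λ ≠ 0` iff `M` is part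
of a sphere; moreover in that case `H` and `K` are nonzero constants on `U`. -/
theorem stmt12 (U : Set Param) (x : Param → Vec3)
    (hU : IsOpen U) (hUconn : IsConnected U)
    (hx : ContDiffOn ℝ (⊤ : ℕ∞) x U) (himm : Immersed x U)
    (hell : ∀ u ∈ U, (fformII x u).PosDef) :
    ((∃ lam : ℝ, lam ≠ 0 ∧
        ∀ u ∈ U, beltrami2 (fformII x) (gaussMap x) u = lam • gaussMap x u) ↔
      (∃ c : Vec3, ∃ r : ℝ, 0 < r ∧ ∀ u ∈ U, norm3 (x u - c) = r)) ∧
    (∀ lam : ℝ, lam ≠ 0 →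
      (∀ u ∈ U, beltrami2 (fformII x) (gaussMap x) u = lam • gaussMap x u) →
      ∃ h k : ℝ, h ≠ 0 ∧ k ≠ 0 ∧
        ∀ u ∈ U, meanCurv x u = h ∧ gaussCurv x u = k) := by
  obtain ⟨hiff, hconst⟩ :=
    stmt12_general U x hU hUconn hx himm fun u hu => (hell u hu).det_pos.ne'
  exact ⟨hiff, fun lam _ => hconst lam⟩
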